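/- (Closed-form APRIL leakage equation.) Let z = E_patch + E_pos ∈ ℝ^{c×p} and let the loss be L(Q,K,V,E_pos) = g(Qz, Kz, Vz) with z = E_patch + E_pos. Then the gradient matrix ∇_{E_pos} L ∈ ℝ^{c×p} of L with respect to the learnable position embedding satisfies (∇_{E_pos} L)(E_patch + E_pos)ᵀ = Qᵀ(∇_Q L) + Kᵀ(∇_K L) + Vᵀ(∇_V L). -/

import Mathlib

/-!
STATEMENT 0 (APRIL, gradients of the self-attention loss w.r.t. Q, K, V).
The loss is `L(Q,K,V,z) = g (Q*z, K*z, V*z)`.  If `g` has gradient matrices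
`Gq, Gk, Gv` (w.r.t. its three arguments, via the Frobenius inner product)
at `(Q*z, K*z, V*z)`, then the gradient matrix of `Q ↦ L(Q,K,V,z)` is
`Gq * zᵀ`, and likewise `Gk * zᵀ` for `K` and `Gv * zᵀ` for `V`.
-/

open Matrix

attribute [local instance] Matrix.normedAddCommGroup Matrix.normedSpace

noncomputable section

/-- `G` is the gradient matrix of the scalar function `F` at `X`:
it represents the Fréchet derivative of `F` at `X` via the Frobenius
inner product, `(dF)(H) = trace (Gᵀ * H)`. -/
def HasGradientMatrixAt {α β : Type*} [Fintype α] [Fintype β]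
    (F : Matrix α β ℝ → ℝ) (G : Matrix α β ℝ) (X : Matrix α β ℝ) : Prop :=
  ∃ D : Matrix α β ℝ →L[ℝ] ℝ, HasFDerivAt F D X ∧ ∀ H, D H = Matrix.trace (Gᵀ * H)

/-- `(Gq, Gk, Gv)` are the gradient matrices of `g` with respect to its three
matrix arguments at the point `x = (q, k, v)`, i.e. they represent the Fréchet
derivative of `g` at `x` via the Frobenius inner product. -/
def HasGradientTripleAt {d p : ℕ}
    (g : Matrix (Fin d) (Fin p) ℝ × Matrix (Fin d) (Fin p) ℝ × Matrix (Fin d) (Fin p) ℝ → ℝ)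
    (Gq Gk Gv : Matrix (Fin d) (Fin p) ℝ)
    (x : Matrix (Fin d) (Fin p) ℝ × Matrix (Fin d) (Fin p) ℝ × Matrix (Fin d) (Fin p) ℝ) :
    Prop :=
  ∃ D : (Matrix (Fin d) (Fin p) ℝ × Matrix (Fin d) (Fin p) ℝ × Matrix (Fin d) (Fin p) ℝ) →L[ℝ] ℝ,
    HasFDerivAt g D x ∧
    ∀ Hq Hk Hv, D (Hq, Hk, Hv) =
      Matrix.trace (Gqᵀ * Hq) + Matrix.trace (Gkᵀ * Hk) + Matrix.trace (Gvᵀ * Hv)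

theorem grad_aux {α β : Type*} [Fintype α] [Fintype β] {W : Type*} [NormedAddCommGroup W]
    [NormedSpace ℝ W] (g : W → ℝ) (D : W →L[ℝ] ℝ) (f : Matrix α β ℝ → W)
    (A : Matrix α β ℝ →ₗ[ℝ] W) (G X : Matrix α β ℝ)
    (hA : ∀ Y, f Y = f X + A (Y - X))
    (hD : HasFDerivAt g D (f X)) (hG : HasGradientMatrixAt (fun Y => g (f Y)) G X)
    (H : Matrix α β ℝ) : Matrix.trace (Gᵀ * H) = D (A H) := by
  obtain ⟨D', hD', hH⟩ := hG
  have hf : HasFDerivAt f (LinearMap.toContinuousLinearMap A) X := by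
    have h1 : HasFDerivAt (fun Y => f X + (LinearMap.toContinuousLinearMap A) (Y - X))
        (LinearMap.toContinuousLinearMap A) X := by
      have h0 : HasFDerivAt (fun Y : Matrix α β ℝ => Y - X)
          (ContinuousLinearMap.id ℝ (Matrix α β ℝ)) X := (hasFDerivAt_id X).sub_const X
      have h2 := HasFDerivAt.comp (f := fun Y : Matrix α β ℝ => Y - X)
        (g := fun Y => (LinearMap.toContinuousLinearMap A) Y) X
        ((LinearMap.toContinuousLinearMap A).hasFDerivAt (x := X - X)) h0
      exact h2.const_add (f X)
    have h3 : f = (fun Y => f X + (LinearMap.toContinuousLinearMap A) (Y - X)) := by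
      funext Y
      exact hA Y
    rw [h3]
    exact h1
  have h4 := hD.comp X hf
  have h5 := hD'.unique h4
  rw [← hH, h5]
  rfl

/-!
STATEMENT 6 (closed-form APRIL leakage equation): with `z = E_patch + E_pos`
and `L(Q,K,V,E_pos) = g (Q z, K z, V z)`, the gradient matrix of `L` w.r.t.
the learnable position embedding satisfies
`(∇_{E_pos} L) * (E_patch + E_pos)ᵀ = Qᵀ (∇_Q L) + Kᵀ (∇_K L) + Vᵀ (∇_V L)`.
-/
theorem april_closed_form_leakage {p c d : ℕ} (hp : 0 < p) (hc : 0 < c) (hd : 0 < d)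
    (g : Matrix (Fin d) (Fin p) ℝ × Matrix (Fin d) (Fin p) ℝ × Matrix (Fin d) (Fin p) ℝ → ℝ)
    (hg : Differentiable ℝ g)
    (Q K V : Matrix (Fin d) (Fin c) ℝ)
    (Epatch Epos : Matrix (Fin c) (Fin p) ℝ)
    (Gq Gk Gv : Matrix (Fin d) (Fin p) ℝ)
    (hgrad : HasGradientTripleAt g Gq Gk Gv
      (Q * (Epatch + Epos), K * (Epatch + Epos), V * (Epatch + Epos)))
    (GE : Matrix (Fin c) (Fin p) ℝ) (GQ GK GV : Matrix (Fin d) (Fin c) ℝ)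
    (hGE : HasGradientMatrixAt
      (fun E => g (Q * (Epatch + E), K * (Epatch + E), V * (Epatch + E))) GE Epos)
    (hGQ : HasGradientMatrixAt
      (fun Q' => g (Q' * (Epatch + Epos), K * (Epatch + Epos), V * (Epatch + Epos))) GQ Q)
    (hGK : HasGradientMatrixAt
      (fun K' => g (Q * (Epatch + Epos), K' * (Epatch + Epos), V * (Epatch + Epos))) GK K)
    (hGV : HasGradientMatrixAt
      (fun V' => g (Q * (Epatch + Epos), K * (Epatch + Epos), V' * (Epatch + Epos))) GV V) :
    GE * (Epatch + Epos)ᵀ = Qᵀ * GQ + Kᵀ * GK + Vᵀ * GV := by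
  obtain ⟨D, hD, hDt⟩ := hgrad
  set z := Epatch + Epos with hz
  have e1 : ∀ (a : Matrix (Fin d) (Fin c) ℝ) (Y : Matrix (Fin c) (Fin p) ℝ),
      a * (Epatch + Y) = a * (Epatch + Epos) + a * (Y - Epos) := fun a Y =>
    Eq.trans (congrArg (fun t => a * t) (by abel)) (Matrix.mul_add a (Epatch + Epos) (Y - Epos))
  have e2 : ∀ (a Y : Matrix (Fin d) (Fin c) ℝ), Y * z = a * z + (Y - a) * z := fun a Y =>
    Eq.trans (congrArg (fun t => t * z) (by abel)) (Matrix.add_mul a (Y - a) z)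
  have hE : ∀ H : Matrix (Fin c) (Fin p) ℝ, Matrix.trace (GEᵀ * H) = D (Q * H, K * H, V * H) :=
    grad_aux g D (fun E => (Q * (Epatch + E), K * (Epatch + E), V * (Epatch + E)))
    { toFun := fun H => (Q * H, K * H, V * H)
      map_add' := fun a b => Prod.ext (Matrix.mul_add _ _ _)
        (Prod.ext (Matrix.mul_add _ _ _) (Matrix.mul_add _ _ _))
      map_smul' := fun a b => Prod.ext (Matrix.mul_smul _ _ _)
        (Prod.ext (Matrix.mul_smul _ _ _) (Matrix.mul_smul _ _ _)) } GE Epos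
    (fun Y => Prod.ext (e1 Q Y) (Prod.ext (e1 K Y) (e1 V Y))) hD hGE
  have hQ : ∀ H : Matrix (Fin d) (Fin c) ℝ, Matrix.trace (GQᵀ * H) = D (H * z, 0, 0) :=
    grad_aux g D (fun Q' => (Q' * z, K * z, V * z))
    { toFun := fun H => (H * z, 0, 0)
      map_add' := fun a b => Prod.ext (Matrix.add_mul _ _ _)
        (Prod.ext (add_zero _).symm (add_zero _).symm)
      map_smul' := fun a b => Prod.ext (Matrix.smul_mul _ _ _)
        (Prod.ext (smul_zero _).symm (smul_zero _).symm) } GQ Q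
    (fun Y => Prod.ext (e2 Q Y) (Prod.ext (add_zero _).symm (add_zero _).symm)) hD hGQ
  have hK : ∀ H : Matrix (Fin d) (Fin c) ℝ, Matrix.trace (GKᵀ * H) = D (0, H * z, 0) :=
    grad_aux g D (fun K' => (Q * z, K' * z, V * z))
    { toFun := fun H => (0, H * z, 0)
      map_add' := fun a b => Prod.ext (add_zero _).symm
        (Prod.ext (Matrix.add_mul _ _ _) (add_zero _).symm)
      map_smul' := fun a b => Prod.ext (smul_zero _).symm
        (Prod.ext (Matrix.smul_mul _ _ _) (smul_zero _).symm) } GK K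
    (fun Y => Prod.ext (add_zero _).symm (Prod.ext (e2 K Y) (add_zero _).symm)) hD hGK
  have hV : ∀ H : Matrix (Fin d) (Fin c) ℝ, Matrix.trace (GVᵀ * H) = D (0, 0, H * z) :=
    grad_aux g D (fun V' => (Q * z, K * z, V' * z))
    { toFun := fun H => (0, 0, H * z)
      map_add' := fun a b => Prod.ext (add_zero _).symm
        (Prod.ext (add_zero _).symm (Matrix.add_mul _ _ _))
      map_smul' := fun a b => Prod.ext (smul_zero _).symm
        (Prod.ext (smul_zero _).symm (Matrix.smul_mul _ _ _)) } GV V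
    (fun Y => Prod.ext (add_zero _).symm (Prod.ext (add_zero _).symm (e2 V Y))) hD hGV
  have h0 : ∀ G : Matrix (Fin d) (Fin p) ℝ,
      Matrix.trace (Gᵀ * (0 : Matrix (Fin d) (Fin p) ℝ)) = 0 := fun G =>
    Eq.trans (congrArg Matrix.trace (Matrix.mul_zero Gᵀ)) (Matrix.trace_zero (Fin p) ℝ)
  simp only [hDt, h0, zero_add, add_zero] at hE hQ hK hV
  apply Matrix.transpose_injective
  rw [Matrix.ext_iff_trace_mul_right]
  intro M
  have hL : Matrix.trace ((GE * zᵀ)ᵀ * M) = Matrix.trace (GEᵀ * (M * z)) := by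
    rw [Matrix.transpose_mul, Matrix.transpose_transpose, Matrix.mul_assoc,
      Matrix.trace_mul_comm z, Matrix.mul_assoc]
  have hR : ∀ A B C : Matrix (Fin c) (Fin c) ℝ, Matrix.trace ((A + B + C)ᵀ * M) =
      Matrix.trace (Aᵀ * M) + Matrix.trace (Bᵀ * M) + Matrix.trace (Cᵀ * M) := by
    intro A B C
    erw [Matrix.transpose_add, Matrix.transpose_add, Matrix.add_mul, Matrix.add_mul,
      Matrix.trace_add, Matrix.trace_add]
  have hT : ∀ A B : Matrix (Fin d) (Fin c) ℝ,
      Matrix.trace ((Aᵀ * B)ᵀ * M) = Matrix.trace (Bᵀ * (A * M)) := by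
    intro A B
    rw [Matrix.transpose_mul, Matrix.transpose_transpose, Matrix.mul_assoc]
  rw [hL, hR, hT, hT, hT, hE, hQ, hK, hV]
  simp only [Matrix.mul_assoc]
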